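/- Let L be a finite join-semidistributive lattice. Then the following are equivalent: (1) the canonical join complex of L is flag; (2) L is crosscut-simplicial; (3) L is semidistributive. -/

import Mathlib

universe u v

def JoinSemidistrib (α : Type*) [Lattice α] : Prop :=
  ∀ x y z : α, x ⊔ y = x ⊔ z → x ⊔ (y ⊓ z) = x ⊔ y

def MeetSemidistrib (α : Type*) [Lattice α] : Prop :=
  ∀ x y z : α, x ⊓ y = x ⊓ z → x ⊓ (y ⊔ z) = x ⊓ y

section JoinDefs

variable {α : Type*} [Lattice α] [OrderBot α]

/-- `j` is join-irreducible: not the bottom element, and `j = a ⊔ b` implies `j = a` or `j = b`. -/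
def JoinIrred (j : α) : Prop :=
  j ≠ ⊥ ∧ ∀ a b : α, j = a ⊔ b → j = a ∨ j = b

/-- `A` join-refines `B`: every element of `A` is below some element of `B`. -/
def JoinRefines (A B : Finset α) : Prop :=
  ∀ a ∈ A, ∃ b ∈ B, a ≤ b

/-- `A` is an irredundant join representation of `w`. -/
def IrredJoinRep (A : Finset α) (w : α) : Prop :=
  A.sup id = w ∧ ∀ A' ⊂ A, A'.sup id < w

/-- `A` is the canonical join representation of `w`: the irredundant join representation
of `w` that join-refines every irredundant join representation of `w`. -/
def CanonicalJoinRep (A : Finset α) (w : α) : Prop :=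
  IrredJoinRep A w ∧ ∀ B : Finset α, IrredJoinRep B w → JoinRefines A B

/-- `A` joins canonically, i.e. `A` is a face of the canonical join complex. -/
def JoinsCanonically (A : Finset α) : Prop :=
  CanonicalJoinRep A (A.sup id)

/-- `j` is a canonical joinand of `w`. -/
def CanonicalJoinand (j w : α) : Prop :=
  ∃ A : Finset α, CanonicalJoinRep A w ∧ j ∈ A

end JoinDefs

/-- The canonical join complex is flag: any finite set of join-irreducible elements all of
whose two-element subsets are faces is itself a face. -/
def FlagCanonicalJoinComplex (α : Type*) [Lattice α] [OrderBot α] [DecidableEq α] : Prop :=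
  ∀ F : Finset α, (∀ j ∈ F, JoinIrred j) →
    (∀ j ∈ F, ∀ j' ∈ F, j ≠ j' → JoinsCanonically ({j, j'} : Finset α)) →
    JoinsCanonically F

/-- A lattice is crosscut-simplicial if for every `x ≤ y` and every proper subset `S` of the
set of atoms of the interval `[x, y]` (elements `a` with `x ⋖ a` and `a ≤ y`), the join of `x`
with all elements of `S` is strictly less than `y`. -/
def CrosscutSimplicial (β : Type*) [Lattice β] : Prop :=
  ∀ x y : β, x ≤ y → ∀ S : Finset β,
    (∀ a ∈ S, x ⋖ a ∧ a ≤ y) →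
    (∃ a : β, (x ⋖ a ∧ a ≤ y) ∧ a ∉ S) →
    S.fold (· ⊔ · : β → β → β) x id < y

section MeetDefs

variable {α : Type*} [Lattice α] [OrderTop α]

/-- `m` is meet-irreducible: not the top element, and `m = a ⊓ b` implies `m = a` or `m = b`. -/
def MeetIrred (m : α) : Prop :=
  m ≠ ⊤ ∧ ∀ a b : α, m = a ⊓ b → m = a ∨ m = b

/-- `A` meet-refines `B`: every element of `A` is above some element of `B`. -/
def MeetRefines (A B : Finset α) : Prop :=
  ∀ a ∈ A, ∃ b ∈ B, b ≤ a

/-- `A` is an irredundant meet representation of `w`. -/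
def IrredMeetRep (A : Finset α) (w : α) : Prop :=
  A.inf id = w ∧ ∀ A' ⊂ A, w < A'.inf id

/-- `A` is the canonical meet representation of `w`. -/
def CanonicalMeetRep (A : Finset α) (w : α) : Prop :=
  IrredMeetRep A w ∧ ∀ B : Finset α, IrredMeetRep B w → MeetRefines A B

/-- `A` meets canonically, i.e. `A` is a face of the canonical meet complex. -/
def MeetsCanonically (A : Finset α) : Prop :=
  CanonicalMeetRep A (A.inf id)

end MeetDefs

/-- The canonical meet complex is flag. -/
def FlagCanonicalMeetComplex (α : Type*) [Lattice α] [OrderTop α] [DecidableEq α] : Prop :=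
  ∀ F : Finset α, (∀ m ∈ F, MeetIrred m) →
    (∀ m ∈ F, ∀ m' ∈ F, m ≠ m' → MeetsCanonically ({m, m'} : Finset α)) →
    MeetsCanonically F

/-!
For `j` and `x` in a lattice, write `j ↙ x` if `j` is minimal among the elements not below `x`.
Everything is translated into this relation. In a finite join-semidistributive lattice, `F` joins
canonically if and only if each `j ∈ F` has some `x` with `j ↙ x` lying above all other members of
`F`; a finite lattice is meet-semidistributive if and only if each set `{x | j ↙ x}` is closed under
joins. Flagness is thus a local-to-global principle for upper bounds in `{x | j ↙ x}`, and joins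
supply them.

Conversely, let `D` be a minimal lower set whose members have upper bounds in `{x | j ↙ x}` but
which has no common one. For each maximal `d ∈ D`, the rest of `D` has an upper bound `x` with
`j ↙ x`. Then `d ↙ x`, and the anti-exchange property expressed by join-semidistributivity gives
`d ↙ x ⊔ j`. So `j` and the maximal elements of `D` pairwise join canonically, and flagness bounds
`D` after all.

If the lattice is crosscut-simplicial, closure of `{x | j ↙ x}` under joins is proved by downward
induction on a common lower bound `m` with `j ↙ m`: the joins are built up from the join of two
covers of `m`, where crosscut-simpliciality applies.
-/

/-- The arrow relation `j ↙ x` of formal concept analysis: `j` is minimal among the elements that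
do not lie below `x`. For `j` join-irreducible in a finite lattice, it says `j ⊓ x = j_*`, where
`j_*` is the element covered by `j`. -/
def DownArrow {α : Type*} [LE α] (j x : α) : Prop :=
  Minimal (fun i => ¬ i ≤ x) j

section Preorder

variable {α : Type*} [Preorder α] {a c j x y : α}

theorem downArrow_iff : DownArrow j x ↔ ¬ j ≤ x ∧ ∀ c < j, c ≤ x := by
  simp only [DownArrow, minimal_iff_forall_lt, not_not]

namespace DownArrow

theorem not_le (h : DownArrow j x) : ¬ j ≤ x :=
  h.prop

theorem le_of_lt (h : DownArrow j x) (hc : c < j) : c ≤ x :=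
  (downArrow_iff.1 h).2 c hc

theorem mono (h : DownArrow j x) (hxy : x ≤ y) (hy : ¬ j ≤ y) : DownArrow j y :=
  downArrow_iff.2 ⟨hy, fun _ hc => (h.le_of_lt hc).trans hxy⟩

end DownArrow

theorem exists_downArrow_le_of_not_le [WellFoundedLT α] (h : ¬ a ≤ x) : ∃ j ≤ a, DownArrow j x :=
  exists_minimal_le_of_wellFoundedLT (fun i => ¬ i ≤ x) a h

end Preorder

namespace DownArrow

variable {α : Type*} [SemilatticeInf α] {j x y : α}

theorem inf_le (h : DownArrow j x) (hy : ¬ j ≤ y) : j ⊓ y ≤ x :=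
  h.le_of_lt (inf_lt_left.2 hy)

theorem inf (hx : DownArrow j x) (hy : DownArrow j y) : DownArrow j (x ⊓ y) :=
  downArrow_iff.2 ⟨fun h => hx.not_le (h.trans inf_le_left),
    fun _ hc => le_inf (hx.le_of_lt hc) (hy.le_of_lt hc)⟩

theorem inf_eq_inf (hx : DownArrow j x) (hy : DownArrow j y) : j ⊓ x = j ⊓ y :=
  le_antisymm (le_inf inf_le_left (hy.inf_le hx.not_le))
    (le_inf inf_le_left (hx.inf_le hy.not_le))

end DownArrow

section JoinIrreducible

variable {α : Type*} [Lattice α] [OrderBot α] {j x : α}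

theorem DownArrow.joinIrred (h : DownArrow j x) : JoinIrred j := by
  refine ⟨fun hj => h.not_le (hj ▸ bot_le), fun a b hab => ?_⟩
  by_contra! hne
  have ha : a < j := lt_of_le_of_ne (hab ▸ le_sup_left) hne.1.symm
  have hb : b < j := lt_of_le_of_ne (hab ▸ le_sup_right) hne.2.symm
  exact h.not_le (hab ▸ sup_le (h.le_of_lt ha) (h.le_of_lt hb))

theorem JoinIrred.exists_downArrow [WellFoundedGT α] (hj : JoinIrred j) : ∃ x, DownArrow j x := by
  obtain ⟨x, hx⟩ := exists_maximal_of_wellFoundedGT (· < j) ⟨⊥, bot_lt_iff_ne_bot.2 hj.1⟩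
  refine ⟨x, downArrow_iff.2 ⟨hx.prop.not_ge, fun c hc => ?_⟩⟩
  have hlt : x ⊔ c < j := by
    refine lt_of_le_of_ne (sup_le hx.prop.le hc.le) fun h => ?_
    rcases hj.2 x c h.symm with rfl | rfl
    exacts [hx.prop.ne rfl, hc.ne rfl]
  exact le_sup_right.trans (hx.le_of_ge hlt le_sup_left)

end JoinIrreducible

section Semidistributivity

variable {α : Type*} [Lattice α] {a b j x : α}

namespace JoinSemidistrib

theorem le_of_le_sup (h : JoinSemidistrib α) (ha : a ≤ x ⊔ b) (hb : b ≤ x ⊔ a)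
    (hab : a ⊓ b ≤ x) : a ≤ x := by
  have hsup : x ⊔ a = x ⊔ b := le_antisymm (sup_le le_sup_left ha) (sup_le le_sup_left hb)
  calc a ≤ x ⊔ a := le_sup_right
    _ = x ⊔ a ⊓ b := (h x a b hsup).symm
    _ = x := sup_eq_left.2 hab

theorem le_of_le_sup_finset_sup [OrderBot α] (h : JoinSemidistrib α) {B : Finset α}
    (ha : a ≤ x ⊔ B.sup id) (hB : ∀ b ∈ B, b ≤ x ⊔ a) (hinf : ∀ b ∈ B, a ⊓ b ≤ x) : a ≤ x := by
  classical
  induction B using Finset.induction_on with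
  | empty => simpa using ha
  | insert b B _ ih =>
    simp only [Finset.forall_mem_insert] at hB hinf
    rw [Finset.sup_insert, id, sup_left_comm, sup_comm] at ha
    have hb : b ≤ x ⊔ B.sup id ⊔ a := hB.1.trans (sup_le_sup_right le_sup_left a)
    exact ih (h.le_of_le_sup ha hb (hinf.1.trans le_sup_left)) hB.2 hinf.2

theorem antiexchange (h : JoinSemidistrib α) (ha : DownArrow a x) (hb : DownArrow b x) (hab : a ≠ b)
    (hle : a ≤ x ⊔ b) : ¬ b ≤ x ⊔ a := by
  intro hle'
  have hinf : a ⊓ b ≤ x := by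
    by_cases hab' : a ≤ b
    · exact inf_le_left.trans (hb.le_of_lt (lt_of_le_of_ne hab' hab))
    · exact ha.inf_le hab'
  exact ha.not_le (h.le_of_le_sup hle hle' hinf)

end JoinSemidistrib

theorem MeetSemidistrib.supClosed_setOf_inf_eq (h : MeetSemidistrib α) :
    SupClosed {y | a ⊓ y = x} :=
  fun y hy z hz => (h a y z (hy.trans hz.symm)).trans hy

theorem MeetSemidistrib.supClosed_downArrow (h : MeetSemidistrib α) (j : α) :
    SupClosed {x | DownArrow j x} := by
  intro y (hy : DownArrow j y) z (hz : DownArrow j z)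
  have hinf : j ⊓ (y ⊔ z) = j ⊓ y := h j y z (hy.inf_eq_inf hz)
  exact hy.mono le_sup_left fun hle => hy.not_le (inf_eq_left.1 (hinf ▸ inf_eq_left.2 hle))

theorem MeetSemidistrib.of_supClosed_downArrow [WellFoundedLT α]
    (h : ∀ j : α, SupClosed {x | DownArrow j x}) : MeetSemidistrib α := by
  intro x y z hyz
  refine le_antisymm ?_ (inf_le_inf_left x le_sup_left)
  by_contra hnle
  obtain ⟨j, hj, hjm⟩ := exists_downArrow_le_of_not_le hnle
  have hjx : j ≤ x := hj.trans inf_le_left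
  have hjy : DownArrow j y := hjm.mono inf_le_right fun hy => hjm.not_le (le_inf hjx hy)
  have hjz : DownArrow j z :=
    (hyz ▸ hjm).mono inf_le_right fun hz => hjm.not_le (hyz ▸ le_inf hjx hz)
  exact (h j hjy hjz).not_le (hj.trans inf_le_right)

end Semidistributivity

section CrosscutSimplicial

theorem fold_sup_mem_of_supClosed {α : Type*} [SemilatticeSup α] {A : Set α} {x : α}
    (hA : SupClosed A) (hx : x ∈ A) {S : Finset α} (hS : ∀ a ∈ S, a ∈ A) :
    S.fold (· ⊔ · : α → α → α) x id ∈ A := by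
  classical
  induction S using Finset.induction_on with
  | empty => exact hx
  | insert b S hb ih =>
    rw [Finset.forall_mem_insert] at hS
    rw [Finset.fold_insert hb]
    exact hA hS.1 (ih hS.2)

variable {α : Type*} [Lattice α] {a j m s t : α}

theorem MeetSemidistrib.crosscutSimplicial (h : MeetSemidistrib α) : CrosscutSimplicial α := by
  rintro x y hxy S hS ⟨a, ⟨hxa, hay⟩, haS⟩
  have hIic : SupClosed (Set.Iic y) := fun _ hb _ hc => sup_le hb hc
  obtain ⟨hle, hinf⟩ : S.fold (· ⊔ · : α → α → α) x id ∈ Set.Iic y ∩ {w | a ⊓ w = x} := by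
    refine fold_sup_mem_of_supClosed (hIic.inter h.supClosed_setOf_inf_eq)
      ⟨hxy, inf_eq_right.2 hxa.le⟩ fun b hb => ⟨(hS b hb).2, ?_⟩
    exact hxa.wcovBy.inf_eq (hS b hb).1.wcovBy (ne_of_mem_of_not_mem hb haS).symm
  refine lt_of_le_of_ne hle fun hfold => hxa.ne ?_
  rw [← hinf, hfold, inf_eq_left.2 hay]

namespace CrosscutSimplicial

theorem eq_or_eq_of_covBy_of_le_sup (h : CrosscutSimplicial α) (hs : m ⋖ s) (ht : m ⋖ t)
    (ha : m ⋖ a) (hle : a ≤ s ⊔ t) : a = s ∨ a = t := by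
  classical
  by_contra hne
  have hlt := h m (s ⊔ t) (hs.le.trans le_sup_left) {s, t} (by simp [hs, ht])
    ⟨a, ⟨ha, hle⟩, by simpa using hne⟩
  simp [Finset.fold_insert_idem, sup_eq_left.2 ht.le] at hlt

theorem downArrow_sup_of_covBy [IsStronglyAtomic α] (h : CrosscutSimplicial α)
    (hjsd : JoinSemidistrib α) (hm : DownArrow j m) (hs : m ⋖ s) (ht : m ⋖ t) (hjs : DownArrow j s)
    (hjt : DownArrow j t) : DownArrow j (s ⊔ t) := by
  refine hjs.mono le_sup_left fun hle => ?_
  obtain ⟨a, ha, haj⟩ := exists_covBy_le_of_lt (left_lt_sup.2 hm.not_le)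
  rcases h.eq_or_eq_of_covBy_of_le_sup hs ht ha
      (haj.trans (sup_le (hs.le.trans le_sup_left) hle)) with rfl | rfl
  · exact hjt.not_le (hjsd.le_of_le_sup (sup_comm a t ▸ hle)
      (haj.trans (sup_le_sup_right ht.le j)) (hjt.inf_le hjs.not_le))
  · exact hjs.not_le (hjsd.le_of_le_sup hle
      (haj.trans (sup_le_sup_right hs.le j)) (hjs.inf_le hjt.not_le))

theorem downArrow_sup_of_le [IsStronglyAtomic α] [WellFoundedGT α] (h : CrosscutSimplicial α)
    (hjsd : JoinSemidistrib α) (hm : DownArrow j m) :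
    ∀ y z, m ≤ y → m ≤ z → DownArrow j y → DownArrow j z → DownArrow j (y ⊔ z) := by
  induction m using WellFoundedGT.induction with
  | _ m ih =>
  intro y z hmy hmz hy hz
  rcases hmy.eq_or_lt with rfl | hmy
  · rwa [sup_eq_right.2 hmz]
  rcases hmz.eq_or_lt with rfl | hmz
  · rwa [sup_eq_left.2 hmy.le]
  obtain ⟨s, hs, hsy⟩ := exists_covBy_le_of_lt hmy
  obtain ⟨t, ht, htz⟩ := exists_covBy_le_of_lt hmz
  have hjs : DownArrow j s := hm.mono hs.le fun hle => hy.not_le (hle.trans hsy)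
  have hjt : DownArrow j t := hm.mono ht.le fun hle => hz.not_le (hle.trans htz)
  have hst : DownArrow j (s ⊔ t) := h.downArrow_sup_of_covBy hjsd hm hs ht hjs hjt
  have hyt : DownArrow j (y ⊔ t) := by
    simpa [← sup_assoc, sup_eq_left.2 hsy] using ih s hs.lt hjs y (s ⊔ t) hsy le_sup_left hy hst
  simpa [sup_assoc, sup_eq_right.2 htz] using ih t ht.lt hjt (y ⊔ t) z le_sup_right htz hyt hz

theorem meetSemidistrib [WellFoundedLT α] [WellFoundedGT α] (h : CrosscutSimplicial α)
    (hjsd : JoinSemidistrib α) : MeetSemidistrib α :=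
  MeetSemidistrib.of_supClosed_downArrow fun _ y hy z hz =>
    h.downArrow_sup_of_le hjsd (hy.inf hz) y z inf_le_left inf_le_right hy hz

end CrosscutSimplicial

end CrosscutSimplicial

section CanonicalJoinComplex

variable {α : Type*} [Lattice α] [OrderBot α] {i j w : α} {A B F : Finset α}

theorem exists_subset_irredJoinRep (B : Finset α) : ∃ A ⊆ B, IrredJoinRep A (B.sup id) := by
  obtain ⟨A, hAB, hA⟩ :=
    exists_minimal_le_of_wellFoundedLT (fun A : Finset α => A.sup id = B.sup id) B rfl
  refine ⟨A, hAB, hA.prop, fun A' hA' => ?_⟩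
  exact lt_of_le_of_ne (Finset.sup_mono (hA'.subset.trans hAB)) (hA.not_prop_of_lt hA')

theorem CanonicalJoinRep.joinRefines_of_sup_eq (h : CanonicalJoinRep A w) (hB : B.sup id = w) :
    JoinRefines A B := by
  obtain ⟨B', hB'B, hB'⟩ := exists_subset_irredJoinRep B
  intro a ha
  obtain ⟨b, hb, hab⟩ := h.2 B' (hB ▸ hB') a ha
  exact ⟨b, hB'B hb, hab⟩

theorem JoinsCanonically.exists_downArrow [WellFoundedGT α] (h : JoinsCanonically F)
    (hj : j ∈ F) : ∃ x, DownArrow j x ∧ ∀ i ∈ F, i ≠ j → i ≤ x := by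
  classical
  have hsup : j ⊔ (F.erase j).sup id = F.sup id := by
    conv_rhs => rw [← Finset.insert_erase hj, Finset.sup_insert, id]
  have hj_erase : ¬ j ≤ (F.erase j).sup id := fun hle =>
    (h.1.2 _ (Finset.erase_ssubset hj)).ne (by rw [← hsup, sup_eq_right.2 hle])
  obtain ⟨x, herase, hx⟩ := exists_maximal_ge_of_wellFoundedGT
    (fun x => x ≤ F.sup id ∧ ¬ j ≤ x) _ ⟨Finset.sup_mono (F.erase_subset j), hj_erase⟩
  have hjx := hx.prop.2
  refine ⟨x, downArrow_iff.2 ⟨hjx, fun c hc => ?_⟩, fun i hi hij =>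
    (Finset.le_sup (f := id) (Finset.mem_erase.2 ⟨hij, hi⟩)).trans herase⟩
  have hle : x ⊔ c ≤ F.sup id :=
    sup_le hx.prop.1 (hc.le.trans (Finset.le_sup (f := id) hj))
  -- Otherwise `{x, c}` joins to `⋁ F`, although neither element is above `j`.
  have hnle : ¬ j ≤ x ⊔ c := by
    intro hjxc
    have hxc : ({x, c} : Finset α).sup id = F.sup id := by
      rw [Finset.sup_insert, Finset.sup_singleton, id, id]
      exact le_antisymm hle (hsup ▸ sup_le hjxc (herase.trans le_sup_left))
    obtain ⟨b, hb, hjb⟩ := h.joinRefines_of_sup_eq hxc j hj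
    rcases Finset.mem_insert.1 hb with rfl | hb
    · exact hjx hjb
    · exact hc.not_ge (Finset.mem_singleton.1 hb ▸ hjb)
  exact le_sup_right.trans (hx.le_of_ge ⟨hle, hnle⟩ le_sup_left)

theorem JoinSemidistrib.joinsCanonically (h : JoinSemidistrib α)
    (hF : ∀ j ∈ F, ∃ x, DownArrow j x ∧ ∀ i ∈ F, i ≠ j → i ≤ x) : JoinsCanonically F := by
  refine ⟨⟨rfl, fun A hA => lt_of_le_of_ne (Finset.sup_mono hA.subset) fun hsup => ?_⟩,
    fun B hB j hj => ?_⟩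
  · obtain ⟨j, hj, hjA⟩ := Finset.exists_of_ssubset hA
    obtain ⟨x, hjx, hx⟩ := hF j hj
    have hAx : A.sup id ≤ x :=
      Finset.sup_le fun i hi => hx i (hA.subset hi) (ne_of_mem_of_not_mem hi hjA)
    exact hjx.not_le ((Finset.le_sup (f := id) hj).trans (hsup ▸ hAx))
  · obtain ⟨x, hjx, hx⟩ := hF j hj
    by_contra! hB_not_ge
    have hF_le : F.sup id ≤ x ⊔ j := Finset.sup_le fun i hi => by
      by_cases hij : i = j
      · exact hij ▸ le_sup_right
      · exact (hx i hi hij).trans le_sup_left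
    have hB_le : ∀ b ∈ B, b ≤ x ⊔ j := fun b hb =>
      (Finset.le_sup (f := id) hb).trans (hB.1.trans_le hF_le)
    have hj_le : j ≤ x ⊔ B.sup id :=
      (Finset.le_sup (f := id) hj).trans (hB.1.ge.trans le_sup_right)
    exact hjx.not_le (h.le_of_le_sup_finset_sup hj_le hB_le
      fun b hb => hjx.inf_le (hB_not_ge b hb))

theorem JoinSemidistrib.joinsCanonically_iff [WellFoundedGT α] (h : JoinSemidistrib α) :
    JoinsCanonically F ↔ ∀ j ∈ F, ∃ x, DownArrow j x ∧ ∀ i ∈ F, i ≠ j → i ≤ x :=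
  ⟨fun hF _ hj => hF.exists_downArrow hj, h.joinsCanonically⟩

variable [DecidableEq α]

theorem JoinSemidistrib.joinsCanonically_pair_iff [WellFoundedGT α] (h : JoinSemidistrib α)
    (hij : i ≠ j) :
    JoinsCanonically {i, j} ↔ (∃ x, DownArrow i x ∧ j ≤ x) ∧ ∃ x, DownArrow j x ∧ i ≤ x := by
  simp [h.joinsCanonically_iff, hij, hij.symm]

theorem JoinSemidistrib.flagCanonicalJoinComplex_iff [WellFoundedGT α]
    (h : JoinSemidistrib α) :
    FlagCanonicalJoinComplex α ↔ ∀ F : Finset α, (∀ j ∈ F, JoinIrred j) →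
      (∀ j ∈ F, ∀ i ∈ F, i ≠ j → ∃ x, DownArrow j x ∧ i ≤ x) →
      ∀ j ∈ F, ∃ x, DownArrow j x ∧ ∀ i ∈ F, i ≠ j → i ≤ x := by
  refine forall₂_congr fun F _ => imp_congr ⟨fun hF j hj i hi hij => ?_,
    fun hF j hj i hi hji => ?_⟩ h.joinsCanonically_iff
  · exact ((h.joinsCanonically_pair_iff hij.symm).1 (hF j hj i hi hij.symm)).1
  · exact (h.joinsCanonically_pair_iff hji).2 ⟨hF j hj i hi hji.symm, hF i hi j hj hji⟩

theorem MeetSemidistrib.flagCanonicalJoinComplex [WellFoundedGT α] (h : MeetSemidistrib α)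
    (hjsd : JoinSemidistrib α) : FlagCanonicalJoinComplex α := by
  refine hjsd.flagCanonicalJoinComplex_iff.2 fun F hirr hF j hj => ?_
  have hbound : ∀ i ∈ F, ∃ x, DownArrow j x ∧ (i ≠ j → i ≤ x) := fun i hi => by
    by_cases hij : i = j
    · obtain ⟨x, hjx⟩ := (hirr j hj).exists_downArrow
      exact ⟨x, hjx, fun h => absurd hij h⟩
    · obtain ⟨x, hjx, hix⟩ := hF j hj i hi hij
      exact ⟨x, hjx, fun _ => hix⟩
  choose! f hjf hf using hbound
  have hclosed : SupClosed {x | DownArrow j x} := h.supClosed_downArrow j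
  exact ⟨F.sup' ⟨j, hj⟩ f, hclosed.finsetSup'_mem ⟨j, hj⟩ hjf,
    fun i hi hij => (hf i hi hij).trans (Finset.le_sup' f hi)⟩

end CanonicalJoinComplex

section FlagImpliesMeetSemidistrib

variable {α : Type*} [Lattice α] {d j x : α} {D : LowerSet α}

theorem JoinSemidistrib.downArrow_sup_of_maximal (h : JoinSemidistrib α)
    (hD : ¬ ∃ x, DownArrow j x ∧ ∀ e ∈ D, e ≤ x) (hd : Maximal (· ∈ D) d) (hjd : j ≠ d)
    (hjx : DownArrow j x) (hx : ∀ e ∈ D, e ≠ d → e ≤ x) : DownArrow d (x ⊔ j) := by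
  have hD_le : ∀ e ∈ D, e ≤ x ⊔ d := fun e he => by
    by_cases hed : e = d
    · exact hed ▸ le_sup_right
    · exact (hx e he hed).trans le_sup_left
  have hdx : DownArrow d x := by
    refine downArrow_iff.2 ⟨fun hle => hD ⟨x, hjx, fun e he => ?_⟩,
      fun c hc => hx c (D.lower hc.le hd.prop) hc.ne⟩
    exact (hD_le e he).trans (sup_le le_rfl hle)
  have hj_le : j ≤ x ⊔ d := by
    by_contra hnle
    exact hD ⟨x ⊔ d, hjx.mono le_sup_left hnle, hD_le⟩
  exact hdx.mono le_sup_left (h.antiexchange hjx hdx hjd hj_le)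

variable [OrderBot α] [DecidableEq α]

namespace FlagCanonicalJoinComplex

theorem exists_downArrow_forall_mem_le [WellFoundedGT α] (h : FlagCanonicalJoinComplex α)
    (hjsd : JoinSemidistrib α) {Y : Finset α} (hj : DownArrow j x)
    (hjY : ∀ d ∈ Y, ∃ y, DownArrow j y ∧ d ≤ y)
    (hY : ∀ d ∈ Y, ∃ y, DownArrow d y ∧ j ≤ y ∧ ∀ e ∈ Y, e ≠ d → e ≤ y) :
    ∃ y, DownArrow j y ∧ ∀ d ∈ Y, d ≤ y := by
  have hirr : ∀ i ∈ insert j Y, JoinIrred i := by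
    refine (Finset.forall_mem_insert ..).2 ⟨hj.joinIrred, fun d hd => ?_⟩
    obtain ⟨y, hdy, -⟩ := hY d hd
    exact hdy.joinIrred
  have hpair : ∀ i ∈ insert j Y, ∀ e ∈ insert j Y, e ≠ i → ∃ y, DownArrow i y ∧ e ≤ y := by
    intro i hi e he hei
    rcases Finset.mem_insert.1 hi with rfl | hi
    · exact hjY e (Finset.mem_of_mem_insert_of_ne he hei)
    · obtain ⟨y, hiy, hjy, hy⟩ := hY i hi
      refine ⟨y, hiy, ?_⟩
      rcases Finset.mem_insert.1 he with rfl | he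
      exacts [hjy, hy e he hei]
  obtain ⟨y, hjy, hy⟩ :=
    hjsd.flagCanonicalJoinComplex_iff.1 h _ hirr hpair j (Finset.mem_insert_self j Y)
  refine ⟨y, hjy, fun d hd => hy d (Finset.mem_insert_of_mem hd) ?_⟩
  rintro rfl
  obtain ⟨z, hdz, hdz', -⟩ := hY d hd
  exact hdz.not_le hdz'

variable [Finite α]

theorem exists_downArrow_forall_le (h : FlagCanonicalJoinComplex α) (hjsd : JoinSemidistrib α)
    (hj : DownArrow j x) (hD : ∀ d ∈ D, ∃ y, DownArrow j y ∧ d ≤ y) :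
    ∃ y, DownArrow j y ∧ ∀ d ∈ D, d ≤ y := by
  induction D using WellFoundedLT.induction with
  | _ D ih =>
  by_contra hno
  have hmax : ∀ d, Maximal (· ∈ D) d → ∃ y, DownArrow d y ∧ j ≤ y ∧ ∀ e ∈ D, e ≠ d → e ≤ y := by
    intro d hd
    have hjd : j ≠ d := by
      obtain ⟨y, hjy, hdy⟩ := hD d hd.prop
      rintro rfl
      exact hjy.not_le hdy
    obtain ⟨y, hjy, hy⟩ := ih (D.erase d) (LowerSet.erase_lt.2 hd.prop) fun e he => hD e he.1
    have hy' : ∀ e ∈ D, e ≠ d → e ≤ y := fun e he hed =>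
      hy e ⟨he, fun hde => hed (hd.eq_of_ge he hde)⟩
    exact ⟨y ⊔ j, hjsd.downArrow_sup_of_maximal hno hd hjd hjy hy', le_sup_right,
      fun e he hed => (hy' e he hed).trans le_sup_left⟩
  obtain ⟨Y, hY⟩ : ∃ Y : Finset α, ∀ d, d ∈ Y ↔ Maximal (· ∈ D) d :=
    ⟨(Set.toFinite {d | Maximal (· ∈ D) d}).toFinset, by simp⟩
  simp only [← hY] at hmax
  have hYD : ∀ d ∈ Y, d ∈ D := fun d hd => ((hY d).1 hd).prop
  obtain ⟨y, hjy, hy⟩ := h.exists_downArrow_forall_mem_le hjsd hj (fun d hd => hD d (hYD d hd))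
    fun d hd => (hmax d hd).imp fun _ hy => ⟨hy.1, hy.2.1, fun e he => hy.2.2 e (hYD e he)⟩
  refine hno ⟨y, hjy, fun e he => ?_⟩
  obtain ⟨d, hed, hd⟩ := (Set.toFinite (D : Set α)).exists_le_maximal he
  exact hed.trans (hy d ((hY d).2 hd))

theorem meetSemidistrib (h : FlagCanonicalJoinComplex α) (hjsd : JoinSemidistrib α) :
    MeetSemidistrib α := by
  refine MeetSemidistrib.of_supClosed_downArrow fun j => ?_
  intro y (hy : DownArrow j y) z (hz : DownArrow j z)
  obtain ⟨x, hjx, hx⟩ := h.exists_downArrow_forall_le hjsd (D := LowerSet.Iic y ⊔ LowerSet.Iic z)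
    hy (by
      rintro d (hdy | hdz)
      exacts [⟨y, hy, hdy⟩, ⟨z, hz, hdz⟩])
  have hyz : y ⊔ z ≤ x := sup_le (hx y (Or.inl le_rfl)) (hx z (Or.inr le_rfl))
  exact hy.mono le_sup_left fun hle => hjx.not_le (hle.trans hyz)

end FlagCanonicalJoinComplex

end FlagImpliesMeetSemidistrib

/-- Theorem 2 (crosscut converse): for a finite join-semidistributive lattice, flagness of the
canonical join complex, crosscut-simpliciality, and semidistributivity are equivalent. -/
theorem stmt_1 {α : Type*} [Lattice α] [OrderBot α] [Fintype α] [DecidableEq α]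
    (hjsd : JoinSemidistrib α) :
    List.TFAE [FlagCanonicalJoinComplex α, CrosscutSimplicial α,
      JoinSemidistrib α ∧ MeetSemidistrib α] := by
  tfae_have 1 → 3 := fun h => ⟨hjsd, h.meetSemidistrib hjsd⟩
  tfae_have 3 → 1 := fun h => h.2.flagCanonicalJoinComplex hjsd
  tfae_have 2 → 3 := fun h => ⟨hjsd, h.meetSemidistrib hjsd⟩
  tfae_have 3 → 2 := fun h => h.2.crosscutSimplicial
  tfae_finish
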